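/- Let M be a countable transitive model of ZF⁻ in which every set is countable (so that 𝒫(ω)^M is a proper class of M), let ℙ be the forcing whose conditions are partial functions from ω to 2 in M ordered by reverse inclusion, and let ℚ be the finite support product of ω-many copies of ℙ. Then there is a ℚ-name τ ∈ M such that for every ℚ-generic filter G over M, τ^G = 𝒫(ω)^M; in particular, forcing with ℚ turns the proper class 𝒫(ω)^M into a set in every ℚ-generic extension. -/

import Mathlib

noncomputable section

namespace CF

open scoped ZFSet

attribute [local instance] Classical.propDecidable

/-! ### First-order formulas of the language of set theory -/

/-- First-order `∈`-formulas with variables indexed by `ℕ`. -/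
inductive EFormula : Type
  | mem : ℕ → ℕ → EFormula
  | eq : ℕ → ℕ → EFormula
  | not : EFormula → EFormula
  | or : EFormula → EFormula → EFormula
  | ex : ℕ → EFormula → EFormula

/-- Satisfaction of an `∈`-formula in the structure `⟨D, ∈⟩` under assignment `v`. -/
def EFormula.Sat (D : Set ZFSet) (v : ℕ → ZFSet) : EFormula → Prop
  | .mem i j => v i ∈ v j
  | .eq i j => v i = v j
  | .not φ => ¬ EFormula.Sat D v φ
  | .or φ ψ => EFormula.Sat D v φ ∨ EFormula.Sat D v ψ
  | .ex i φ => ∃ x ∈ D, EFormula.Sat D (Function.update v i x) φ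

/-- All variables occurring in the formula are `< m`. -/
def EFormula.VarsLt (m : ℕ) : EFormula → Prop
  | .mem i j => i < m ∧ j < m
  | .eq i j => i < m ∧ j < m
  | .not φ => EFormula.VarsLt m φ
  | .or φ ψ => EFormula.VarsLt m φ ∧ EFormula.VarsLt m ψ
  | .ex i φ => i < m ∧ EFormula.VarsLt m φ

/-- First-order formulas of the two-sorted language of `GB⁻`: set variables indexed by `ℕ`,
class parameters indexed by `ℕ`, and only set quantifiers. -/
inductive GBFormula : Type
  | mem : ℕ → ℕ → GBFormula
  | eq : ℕ → ℕ → GBFormula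
  | cls : ℕ → ℕ → GBFormula    -- `vᵢ ∈ C_j`
  | not : GBFormula → GBFormula
  | or : GBFormula → GBFormula → GBFormula
  | ex : ℕ → GBFormula → GBFormula

/-- Satisfaction of a `GBFormula` with set quantifiers ranging over `Mset`,
class parameters `Cs` and set assignment `v`. -/
def GBFormula.Sat (Mset : Set ZFSet) (Cs : ℕ → Set ZFSet) (v : ℕ → ZFSet) : GBFormula → Prop
  | .mem i j => v i ∈ v j
  | .eq i j => v i = v j
  | .cls i j => v i ∈ Cs j
  | .not φ => ¬ GBFormula.Sat Mset Cs v φ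
  | .or φ ψ => GBFormula.Sat Mset Cs v φ ∨ GBFormula.Sat Mset Cs v ψ
  | .ex i φ => ∃ x ∈ Mset, GBFormula.Sat Mset Cs (Function.update v i x) φ

/-! ### Countable transitive models of GB⁻ -/

/-- A countable transitive second-order model `𝕄 = ⟨M, 𝒞⟩` of `GB⁻`:
`M` is transitive and countable, classes are subsets of `M`, sets are classes, and the axioms
of `GB⁻` hold (extensionality and foundation are automatic for `ZFSet`; the set axioms of `ZF⁻`
with separation and collection allowing class parameters, together with first-order class
comprehension, are listed). -/
structure GBModel.{u} where
  M : Set ZFSet.{u}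
  Cls : Set (Set ZFSet)
  countable_M : M.Countable
  countable_Cls : Cls.Countable
  transitive : ∀ x ∈ M, ∀ y : ZFSet, y ∈ x → y ∈ M
  sets_are_classes : ∀ x ∈ M, x.toSet ∈ Cls
  classes_sub : ∀ C ∈ Cls, C ⊆ M
  empty_mem : (∅ : ZFSet) ∈ M
  pair_mem : ∀ x ∈ M, ∀ y ∈ M, ({x, y} : ZFSet) ∈ M
  sUnion_mem : ∀ x ∈ M, (⋃₀ x : ZFSet) ∈ M
  omega_mem : ZFSet.omega ∈ M
  comprehension : ∀ (φ : GBFormula) (v : ℕ → ZFSet) (Cs : ℕ → Set ZFSet),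
    (∀ n, v n ∈ M) → (∀ n, Cs n ∈ Cls) →
    {x : ZFSet | x ∈ M ∧ GBFormula.Sat M Cs (Function.update v 0 x) φ} ∈ Cls
  separation : ∀ C ∈ Cls, ∀ a ∈ M, ∃ b ∈ M, ∀ x : ZFSet, x ∈ b ↔ x ∈ a ∧ x ∈ C
  collection : ∀ C ∈ Cls, ∀ a ∈ M,
    (∀ x : ZFSet, x ∈ a → ∃ y ∈ M, x.pair y ∈ C) →
    ∃ b ∈ M, ∀ x : ZFSet, x ∈ a → ∃ y : ZFSet, y ∈ b ∧ x.pair y ∈ C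

/-- A notion of class forcing `ℙ = ⟨P, ≤_ℙ⟩` for `𝕄`: a partial order (with maximal element
`𝟙_ℙ`) whose domain and order relation are classes of `𝕄`. -/
structure ClassForcing (𝕄 : GBModel) where
  P : Set ZFSet
  le : ZFSet → ZFSet → Prop
  one : ZFSet
  one_mem : one ∈ P
  le_one : ∀ p ∈ P, le p one
  le_refl : ∀ p ∈ P, le p p
  le_trans : ∀ p q r : ZFSet, le p q → le q r → le p r
  P_cls : P ∈ 𝕄.Cls
  le_cls : {x : ZFSet | ∃ p ∈ P, ∃ q ∈ P, le p q ∧ x = p.pair q} ∈ 𝕄.Cls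

/-! ### Names and their evaluation -/

/-- Auxiliary rank-bounded version of `IsName`. -/
def IsNameAux (S : Set ZFSet) (o : Ordinal) (σ : ZFSet) : Prop :=
  ∀ x ∈ σ.toSet, ∃ τ p : ZFSet, x = τ.pair p ∧ p ∈ S ∧
    ∃ _h : τ.rank < o, IsNameAux S τ.rank τ
termination_by o

/-- `σ` is a `ℙ`-name (for the forcing with conditions `S`): every element of `σ` is a pair
`⟨τ, p⟩` with `τ` a `ℙ`-name and `p ∈ S`. -/
def IsName (S : Set ZFSet) (σ : ZFSet) : Prop := IsNameAux S σ.rank σ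

/-- Image of a ZFSet under an arbitrary function (using choice for definability). -/
def zimage (f : ZFSet → ZFSet) (x : ZFSet) : ZFSet :=
  @ZFSet.image f (Classical.allZFSetDefinable _) x

/-- Auxiliary rank-bounded version of the evaluation `σ^G` of a name by a filter. -/
def nameEvalAux (G : Set ZFSet) (o : Ordinal) (σ : ZFSet) : ZFSet :=
  zimage (fun τ => if h : τ.rank < o then nameEvalAux G τ.rank τ else ∅)
    (ZFSet.sep (fun τ => ∃ p, p ∈ G ∧ τ.pair p ∈ σ) (⋃₀ ⋃₀ σ))
termination_by o
decreasing_by exact h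

/-- The evaluation `σ^G = {τ^G | ∃ p ∈ G, ⟨τ, p⟩ ∈ σ}` of a name `σ` by a filter `G`. -/
def nameEval (G : Set ZFSet) (σ : ZFSet) : ZFSet := nameEvalAux G σ.rank σ

/-- Auxiliary rank-bounded version of `nameTC`. -/
def nameTCAux (o : Ordinal) (σ : ZFSet) : Set ZFSet :=
  {x | ∃ τ p : ZFSet, τ.pair p ∈ σ ∧ (x = p ∨ ∃ _h : τ.rank < o, x ∈ nameTCAux τ.rank τ)}
termination_by o

/-- The set `tc(σ) = ⋃ {{p} ∪ tc(τ) | ⟨τ,p⟩ ∈ σ}` of conditions appearing in the transitive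
closure of the name `σ`. -/
def nameTC (σ : ZFSet) : Set ZFSet := nameTCAux σ.rank σ

/-! ### Filters, genericity, generic extensions -/

/-- `G` is a filter on the partial order with domain `S` and ordering `le`. -/
def IsFilterOn (S : Set ZFSet) (le : ZFSet → ZFSet → Prop) (G : Set ZFSet) : Prop :=
  G ⊆ S ∧ G.Nonempty ∧ (∀ p ∈ G, ∀ q ∈ S, le p q → q ∈ G) ∧
    ∀ p ∈ G, ∀ q ∈ G, ∃ r ∈ G, le r p ∧ le r q

/-- `D` is a dense subclass of the partial order `⟨S, le⟩`. -/
def DenseIn (S : Set ZFSet) (le : ZFSet → ZFSet → Prop) (D : Set ZFSet) : Prop :=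
  D ⊆ S ∧ ∀ p ∈ S, ∃ q ∈ D, le q p

/-- `G` is a generic filter on `⟨S, le⟩` over `𝕄`: a filter meeting every dense subclass
of `⟨S, le⟩` lying in `𝒞`. -/
def IsGeneric (𝕄 : GBModel) (S : Set ZFSet) (le : ZFSet → ZFSet → Prop) (G : Set ZFSet) : Prop :=
  IsFilterOn S le G ∧ ∀ D ∈ 𝕄.Cls, DenseIn S le D → (G ∩ D).Nonempty

/-- The generic extension `M[G] = {σ^G | σ ∈ M a name for the forcing with domain S}`. -/
def MGen (𝕄 : GBModel) (S : Set ZFSet) (G : Set ZFSet) : Set ZFSet :=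
  {x | ∃ σ : ZFSet, σ ∈ 𝕄.M ∧ IsName S σ ∧ nameEval G σ = x}

/-! ### Compatibility, the set decision property -/

/-- `p` and `q` are compatible in `⟨S, le⟩`. -/
def Compat (S : Set ZFSet) (le : ZFSet → ZFSet → Prop) (p q : ZFSet) : Prop :=
  ∃ r ∈ S, le r p ∧ le r q

/-- `p ≤* q` : every extension of `p` is compatible with `q`. -/
def leStar (S : Set ZFSet) (le : ZFSet → ZFSet → Prop) (p q : ZFSet) : Prop :=
  ∀ r ∈ S, le r p → Compat S le r q

/-- `p` decides the set of conditions `A`: for every `a ∈ A`, either `p ≤* a` or `p ⊥ a`. -/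
def Decides (S : Set ZFSet) (le : ZFSet → ZFSet → Prop) (p A : ZFSet) : Prop :=
  ∀ a : ZFSet, a ∈ A → leStar S le p a ∨ ¬ Compat S le p a

/-- The set decision property: every set of conditions in `M` is decided densely. -/
def SetDecisionProperty (𝕄 : GBModel) (F : ClassForcing 𝕄) : Prop :=
  ∀ p ∈ F.P, ∀ A : ZFSet, A ∈ 𝕄.M → (∀ a : ZFSet, a ∈ A → a ∈ F.P) →
    ∃ q ∈ F.P, F.le q p ∧ Decides F.P F.le q A

/-! ### The forcing theorem -/

/-- Encode a finite list of sets as a single set by iterated Kuratowski pairing. -/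
def listEncode : List ZFSet → ZFSet
  | [] => ∅
  | a :: l => a.pair (listEncode l)

/-- The assignment sending variable `n < m` to `σₙ^G` (and `∅` beyond `m`). -/
def namesAssign (G : Set ZFSet) (m : ℕ) (σs : Fin m → ZFSet) : ℕ → ZFSet :=
  fun n => if h : n < m then nameEval G (σs ⟨n, h⟩) else ∅

/-- `p ⊩_ℙ φ(σ₀, …, σ_{m-1})` : for every generic `G ∋ p`, `M[G] ⊨ φ(σ₀^G, …, σ_{m-1}^G)`. -/
def Forces (𝕄 : GBModel) (F : ClassForcing 𝕄) (φ : EFormula) (m : ℕ) (p : ZFSet)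
    (σs : Fin m → ZFSet) : Prop :=
  ∀ G : Set ZFSet, IsGeneric 𝕄 F.P F.le G → p ∈ G →
    EFormula.Sat (MGen 𝕄 F.P G) (namesAssign G m σs) φ

/-- `ℙ` satisfies the forcing theorem over `𝕄`: for every `∈`-formula `φ(v₀,…,v_{m-1})`,
the forcing relation is a class of `𝕄` (definability lemma) and everything true in a generic
extension is forced by a condition in the generic filter (truth lemma). -/
def SatisfiesForcingTheorem (𝕄 : GBModel) (F : ClassForcing 𝕄) : Prop :=
  ∀ (φ : EFormula) (m : ℕ), EFormula.VarsLt m φ →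
    ({x : ZFSet | ∃ p ∈ F.P, ∃ σs : Fin m → ZFSet,
        (∀ i, σs i ∈ 𝕄.M ∧ IsName F.P (σs i)) ∧
        Forces 𝕄 F φ m p σs ∧
        x = p.pair (listEncode (List.ofFn σs))} ∈ 𝕄.Cls) ∧
    ∀ σs : Fin m → ZFSet, (∀ i, σs i ∈ 𝕄.M ∧ IsName F.P (σs i)) →
      ∀ G : Set ZFSet, IsGeneric 𝕄 F.P F.le G →
        EFormula.Sat (MGen 𝕄 F.P G) (namesAssign G m σs) φ →
        ∃ p ∈ G, Forces 𝕄 F φ m p σs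

/-! ### Complete subforcings, the set reduction property -/

/-- `A` is an antichain of the partial order `⟨S, le⟩`. -/
def IsAntichainIn (S : Set ZFSet) (le : ZFSet → ZFSet → Prop) (A : Set ZFSet) : Prop :=
  A ⊆ S ∧ ∀ p ∈ A, ∀ q ∈ A, p ≠ q → ¬ Compat S le p q

/-- `A` is a maximal antichain of the partial order `⟨S, le⟩`. -/
def IsMaxAntichainIn (S : Set ZFSet) (le : ZFSet → ZFSet → Prop) (A : Set ZFSet) : Prop :=
  IsAntichainIn S le A ∧ ∀ p ∈ S, ∃ a ∈ A, Compat S le p a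

/-- `ℚ ⊲∘ ℙ` : `Q` is a set-sized complete subforcing of `ℙ` (with the induced ordering):
`Q ∈ M`, `Q ⊆ P`, `𝟙 ∈ Q`, and every maximal antichain of `ℚ` in `M` is predense in `ℙ`. -/
def IsCompleteSub (𝕄 : GBModel) (F : ClassForcing 𝕄) (Q : ZFSet) : Prop :=
  Q ∈ 𝕄.M ∧ Q.toSet ⊆ F.P ∧ F.one ∈ Q ∧
    ∀ A : ZFSet, A ∈ 𝕄.M → A.toSet ⊆ Q.toSet → IsMaxAntichainIn Q.toSet F.le A.toSet →
      ∀ p ∈ F.P, ∃ a : ZFSet, a ∈ A ∧ Compat F.P F.le p a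

/-- `ℚ^{∥q}` : the conditions of `Q` compatible with `q` in `ℙ`. -/
def QPar (𝕄 : GBModel) (F : ClassForcing 𝕄) (Q : ZFSet) (q : ZFSet) : Set ZFSet :=
  {r | r ∈ Q ∧ Compat F.P F.le r q}

/-- The property `(*)(A, q, ℚ)`: for every `a ∈ A`, the set of `r ∈ ℚ^{∥q}` such that either
all `s ≤ q, r` satisfy `s ≤* a`, or all `s ≤ q, r` satisfy `s ⊥ a`, is dense in `ℚ^{∥q}`. -/
def StarProp (𝕄 : GBModel) (F : ClassForcing 𝕄) (A q Q : ZFSet) : Prop :=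
  ∀ a : ZFSet, a ∈ A → ∀ r₀ ∈ QPar 𝕄 F Q q, ∃ r₁ ∈ QPar 𝕄 F Q q, F.le r₁ r₀ ∧
    ((∀ s ∈ F.P, F.le s q → F.le s r₁ → leStar F.P F.le s a) ∨
      (∀ s ∈ F.P, F.le s q → F.le s r₁ → ¬ Compat F.P F.le s a))

/-- The set reduction property. -/
def SetReductionProperty (𝕄 : GBModel) (F : ClassForcing 𝕄) : Prop :=
  ∀ A : ZFSet, A ∈ 𝕄.M → (∀ a : ZFSet, a ∈ A → a ∈ F.P) →
    ∀ p ∈ F.P, ∃ q ∈ F.P, F.le q p ∧ ∃ Q : ZFSet, IsCompleteSub 𝕄 F Q ∧ StarProp 𝕄 F A q Q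

/-- Every new set added by `ℙ` is added by a set-sized complete subforcing of `ℙ`. -/
def EveryNewSetBySub (𝕄 : GBModel) (F : ClassForcing 𝕄) : Prop :=
  ∀ G : Set ZFSet, IsGeneric 𝕄 F.P F.le G →
    ∀ x : ZFSet, x ∈ MGen 𝕄 F.P G → x ∉ 𝕄.M →
      ∃ Q : ZFSet, IsCompleteSub 𝕄 F Q ∧ x ∈ MGen 𝕄 Q.toSet (G ∩ Q.toSet)

/-! ### The q-reduction of a name -/

/-- First component of a Kuratowski pair (junk value `∅` otherwise). -/
def fstZ (x : ZFSet) : ZFSet :=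
  if h : ∃ a b : ZFSet, x = a.pair b then h.choose else ∅

/-- Second component of a Kuratowski pair (junk value `∅` otherwise). -/
def sndZ (x : ZFSet) : ZFSet :=
  if h : ∃ a b : ZFSet, x = a.pair b then h.choose_spec.choose else ∅

/-- Cartesian product of two `ZFSet`s. -/
def zprod (a b : ZFSet) : ZFSet :=
  ZFSet.sep (fun x => ∃ u v : ZFSet, u ∈ a ∧ v ∈ b ∧ x = u.pair v)
    (ZFSet.powerset (ZFSet.powerset (a ∪ b)))

/-- Auxiliary rank-bounded version of the `q`-reduction of a name to `Q`. -/
def reduceAux (S : Set ZFSet) (le : ZFSet → ZFSet → Prop) (Q q : ZFSet) (o : Ordinal)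
    (σ : ZFSet) : ZFSet :=
  zimage
    (fun x =>
      (if h : (fstZ x).rank < o then reduceAux S le Q q (fstZ x).rank (fstZ x) else ∅).pair
        (sndZ x))
    (ZFSet.sep
      (fun x => ∃ τ r : ZFSet, x = τ.pair r ∧ r ∈ Q ∧
        ∃ a : ZFSet, τ.pair a ∈ σ ∧ ∀ s ∈ S, le s q → le s r → leStar S le s a)
      (zprod (⋃₀ ⋃₀ σ) Q))
termination_by o
decreasing_by exact h

/-- The `q`-reduction `σ_q^ℚ = {⟨τ_q^ℚ, r⟩ | r ∈ ℚ ∧ ∃a (⟨τ,a⟩ ∈ σ ∧ ∀ s ≤ q,r (s ≤* a))}`. -/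
def reduceName (S : Set ZFSet) (le : ZFSet → ZFSet → Prop) (Q q σ : ZFSet) : ZFSet :=
  reduceAux S le Q q σ.rank σ

/-! ### Projections -/

/-- `f` is a projection from `⟨S, le⟩` (with maximum `one`) onto the subforcing with domain
`Qs`, respecting `X`. -/
def IsProjectionResp (S : Set ZFSet) (le : ZFSet → ZFSet → Prop) (one : ZFSet)
    (Qs X : Set ZFSet) (f : ZFSet → ZFSet) : Prop :=
  (∀ p ∈ S, f p ∈ Qs) ∧
  f one = one ∧
  (∀ p ∈ S, ∀ q ∈ S, le p q → le (f p) (f q)) ∧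
  (∀ p ∈ S, ∀ q ∈ Qs, le q (f p) → ∃ r ∈ S, le r p ∧ le (f r) q) ∧
  (∀ p ∈ X, ∀ q ∈ S, le (f q) p → le q p) ∧
  (∀ p ∈ X, f p = p)

/-- `ℙ` is approachable by projections: there is a class `Π ∈ 𝒞` whose sections `π_{X,y}`
are such that for every set `X ⊆ ℙ` there are a set `y` and a set-sized subforcing `ℚ ⊇ X ∪ {𝟙}`
of `ℙ` with `π_{X,y} : ℙ → ℚ` a projection respecting `X`. -/
def ApproachableByProjections (𝕄 : GBModel) (F : ClassForcing 𝕄) : Prop :=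
  ∃ Pi ∈ 𝕄.Cls, ∀ X : ZFSet, X ∈ 𝕄.M → (∀ x : ZFSet, x ∈ X → x ∈ F.P) →
    ∃ y ∈ 𝕄.M, ∃ Q : ZFSet, Q ∈ 𝕄.M ∧ Q.toSet ⊆ F.P ∧ (∀ x : ZFSet, x ∈ X → x ∈ Q) ∧
      F.one ∈ Q ∧ ∃ f : ZFSet → ZFSet,
        (∀ u ∈ F.P, ∀ v : ZFSet, (f u = v ↔ X.pair (y.pair (u.pair v)) ∈ Pi)) ∧
        IsProjectionResp F.P F.le F.one Q.toSet X.toSet f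

/-- `p ⊩ σ ⊆ τ` for the forcing with domain `S` and ordering `le`. -/
def ForcesSubset (𝕄 : GBModel) (S : Set ZFSet) (le : ZFSet → ZFSet → Prop)
    (p σ τ : ZFSet) : Prop :=
  ∀ G : Set ZFSet, IsGeneric 𝕄 S le G → p ∈ G → nameEval G σ ⊆ nameEval G τ

/-! ### Bounded names, turning proper classes into sets -/

/-- The possible values of the name `σ` in generic extensions. -/
def PossibleValues (𝕄 : GBModel) (S : Set ZFSet) (le : ZFSet → ZFSet → Prop)
    (σ : ZFSet) : Set ZFSet :=
  {x | ∃ G : Set ZFSet, IsGeneric 𝕄 S le G ∧ nameEval G σ = x}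

/-- The name `σ` is bounded: some `A ∈ M` covers all its possible values lying in `M`. -/
def IsBoundedName (𝕄 : GBModel) (F : ClassForcing 𝕄) (σ : ZFSet) : Prop :=
  ∃ A ∈ 𝕄.M, PossibleValues 𝕄 F.P F.le σ ∩ 𝕄.M ⊆ A.toSet

/-- `ℙ` has bounded names: every `ℙ`-name in `M` is bounded. -/
def HasBoundedNames (𝕄 : GBModel) (F : ClassForcing 𝕄) : Prop :=
  ∀ σ : ZFSet, σ ∈ 𝕄.M → IsName F.P σ → IsBoundedName 𝕄 F σ

/-- `X` is a proper class of `𝕄`: a class of `𝕄` that is not (the extension of) a set of `𝕄`. -/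
def IsProperClass (𝕄 : GBModel) (X : Set ZFSet) : Prop :=
  X ∈ 𝕄.Cls ∧ ¬ ∃ x ∈ 𝕄.M, x.toSet = X

/-- The proper class `X` of `𝕄` is turned into a set by forcing with `ℙ`: some `ℙ`-name in `M`
evaluates to `X` under some generic filter. -/
def TurnsIntoSet (𝕄 : GBModel) (F : ClassForcing 𝕄) (X : Set ZFSet) : Prop :=
  ∃ σ : ZFSet, σ ∈ 𝕄.M ∧ IsName F.P σ ∧
    ∃ G : Set ZFSet, IsGeneric 𝕄 F.P F.le G ∧ (nameEval G σ).toSet = X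

/-! ### Functions and partial functions as sets, collapse forcings -/

/-- `p` is a partial function from (a subset of) `γ` into the class `Y`. -/
def IsPFunOn (p γ : ZFSet) (Y : Set ZFSet) : Prop :=
  (∀ x : ZFSet, x ∈ p → ∃ a b : ZFSet, x = a.pair b ∧ a ∈ γ ∧ b ∈ Y) ∧
  ∀ a b b' : ZFSet, a.pair b ∈ p → a.pair b' ∈ p → b = b'

/-- The domain of a set of pairs. -/
def pdom (p : ZFSet) : Set ZFSet := {a | ∃ b : ZFSet, a.pair b ∈ p}

/-- `f` is (the graph of) an injective function from `X` into `Y`. -/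
def ZInjFun (f : ZFSet) (X Y : Set ZFSet) : Prop :=
  (∀ x : ZFSet, x ∈ f → ∃ a b : ZFSet, x = a.pair b ∧ a ∈ X ∧ b ∈ Y) ∧
  (∀ a b b' : ZFSet, a.pair b ∈ f → a.pair b' ∈ f → b = b') ∧
  (∀ a ∈ X, ∃ b : ZFSet, a.pair b ∈ f) ∧
  (∀ a a' b : ZFSet, a.pair b ∈ f → a'.pair b ∈ f → a = a')

/-- `D` has size less than the cardinality of `γ` in the sense of `M`:
no function of `M` injects `γ` into `D`. -/
def SmallerThan (𝕄 : GBModel) (γ : ZFSet) (D : Set ZFSet) : Prop :=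
  ¬ ∃ f ∈ 𝕄.M, ZInjFun f γ.toSet D

/-- Conditions of `Col(γ, Y)^M`: partial functions of `M` from `γ` to `Y` whose domain has
size less than the cardinality of `γ` in `M`. -/
def ColCond (𝕄 : GBModel) (γ : ZFSet) (Y : Set ZFSet) (p : ZFSet) : Prop :=
  p ∈ 𝕄.M ∧ IsPFunOn p γ Y ∧ SmallerThan 𝕄 γ (pdom p)

/-- Conditions of `Col₋*(γ, Y)^M`: those conditions of `Col(γ, Y)^M` whose domain is
an ordinal. -/
def ColStarCond (𝕄 : GBModel) (γ : ZFSet) (Y : Set ZFSet) (p : ZFSet) : Prop :=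
  ColCond 𝕄 γ Y p ∧ ∃ β : ZFSet, β.IsOrdinal ∧ pdom p = β.toSet

/-- `f` is (the graph of) a function with domain `I`. -/
def ZFuncOn (f I : ZFSet) : Prop :=
  (∀ x : ZFSet, x ∈ f → ∃ a b : ZFSet, x = a.pair b ∧ a ∈ I) ∧
  (∀ a b b' : ZFSet, a.pair b ∈ f → a.pair b' ∈ f → b = b') ∧
  (∀ a : ZFSet, a ∈ I → ∃ b : ZFSet, a.pair b ∈ f)

/-- Application of a set-function to an argument (junk value `∅` if undefined). -/
def zapp (f i : ZFSet) : ZFSet :=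
  if h : ∃ b : ZFSet, i.pair b ∈ f then h.choose else ∅

/-! ### Pretameness -/

/-- `ℙ` is pretame for `𝕄`: for every `p ∈ ℙ`, `I ∈ M` and every `𝒞`-coded sequence
`⟨D_i | i ∈ I⟩` (coded as the class of pairs `⟨i, x⟩` with `x ∈ D_i`) of dense subclasses
of `ℙ`, there are `q ≤ p` and `⟨d_i | i ∈ I⟩ ∈ M` with `d_i ⊆ D_i` predense below `q`. -/
def Pretame (𝕄 : GBModel) (F : ClassForcing 𝕄) : Prop :=
  ∀ p ∈ F.P, ∀ I : ZFSet, I ∈ 𝕄.M → ∀ D ∈ 𝕄.Cls,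
    (∀ i : ZFSet, i ∈ I →
      (∀ x : ZFSet, i.pair x ∈ D → x ∈ F.P) ∧ ∀ r ∈ F.P, ∃ s : ZFSet, i.pair s ∈ D ∧ F.le s r) →
    ∃ q ∈ F.P, F.le q p ∧ ∃ d ∈ 𝕄.M, ZFuncOn d I ∧
      ∀ i : ZFSet, i ∈ I → (∀ x : ZFSet, x ∈ zapp d i → i.pair x ∈ D) ∧
        ∀ r ∈ F.P, F.le r q → ∃ a : ZFSet, a ∈ zapp d i ∧ Compat F.P F.le r a

/-! ### The specific forcings of Sections 6 and 7 -/

/-- Conditions of Definition 6.8: (not necessarily finite) partial functions from `ω` to `2`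
lying in `M`. -/
def PCond (𝕄 : GBModel) (p : ZFSet) : Prop :=
  p ∈ 𝕄.M ∧ IsPFunOn p ZFSet.omega {x : ZFSet | x = ∅ ∨ x = ({∅} : ZFSet)}

/-- Conditions of the finite support product `ℚ` of `ω` many copies of `ℙ`:
finite sequences `⟨p₀, …, p_k⟩` of `ℙ`-conditions. -/
def QCond (𝕄 : GBModel) (s : ZFSet) : Prop :=
  s ∈ 𝕄.M ∧ ∃ n : ZFSet, n ∈ ZFSet.omega ∧ ZFuncOn s n ∧
    ∀ i : ZFSet, i ∈ n → PCond 𝕄 (zapp s i)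

/-- The coordinatewise ordering on `ℚ`. -/
def QLe (s' s : ZFSet) : Prop :=
  pdom s ⊆ pdom s' ∧ ∀ i ∈ pdom s, zapp s i ⊆ zapp s' i

/-- The power class `𝒫(ω)^M`. -/
def PowOmega (𝕄 : GBModel) : Set ZFSet :=
  {x : ZFSet | x ∈ 𝕄.M ∧ x ⊆ ZFSet.omega}

/-- `X ⊆ M` is definable over `⟨M, ∈⟩` (from set parameters). -/
def DefinableOver (Mset : Set ZFSet) (X : Set ZFSet) : Prop :=
  ∃ (φ : EFormula) (v : ℕ → ZFSet), (∀ n, v n ∈ Mset) ∧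
    X = {x : ZFSet | x ∈ Mset ∧ EFormula.Sat Mset (Function.update v 0 x) φ}

/-- Every set of `M` is countable in `M`: it injects into `ω` by a function of `M`. -/
def AllSetsCountable (𝕄 : GBModel) : Prop :=
  ∀ x ∈ 𝕄.M, ∃ f ∈ 𝕄.M, ZInjFun f x.toSet ZFSet.omega.toSet

/-!
Every condition of `ℙ` extends to a total function `ω → 2` in `M`, that is to the characteristic
function of some `x ∈ 𝒫(ω)^M`, and such a function has no proper extension. Hence the conditions of
`ℚ` whose `j`-th entry is total are dense, so the `j`-th generic function is the characteristic
function of an element of `𝒫(ω)^M`. Conversely, given `x ∈ 𝒫(ω)^M`, every condition has a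
coordinate outside its finite support, at which the characteristic function of `x` can be added, so
`x` occurs at some coordinate. The name collecting the canonical names of all these reals therefore
evaluates to `𝒫(ω)^M`; it uses only the conditions whose one nonempty entry is `{⟨k, 1⟩}`, and
these form a set of `M`. That `𝒫(ω)^M` is not a set of `M` is Cantor's theorem in `M`.
-/

/-! ### Definability over a model -/

section Definability

variable (𝕄 : GBModel)

theorem exists_range_eq_cls : ∃ Cs : ℕ → Set ZFSet, 𝕄.Cls = Set.range Cs :=
  𝕄.countable_Cls.exists_eq_range ⟨_, 𝕄.sets_are_classes ∅ 𝕄.empty_mem⟩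

/-- An enumeration of all classes of `𝕄`. Using it as the list of class parameters of every formula
spares us from tracking which classes occur. -/
def classEnum : ℕ → Set ZFSet := (exists_range_eq_cls 𝕄).choose

theorem cls_eq_range_classEnum : 𝕄.Cls = Set.range (classEnum 𝕄) :=
  (exists_range_eq_cls 𝕄).choose_spec

theorem classEnum_mem (j : ℕ) : classEnum 𝕄 j ∈ 𝕄.Cls :=
  cls_eq_range_classEnum 𝕄 ▸ Set.mem_range_self j

/-- An `n`-ary predicate definable over `𝕄` from class parameters. The formula is required for every
choice `ρ` of the variables standing for the arguments, so that it can be re-used in any context. In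
a context `w`, the most recently bound variable is `w 0` and the earlier ones are `Fin.tail w`. -/
def DefinablePred (n : ℕ) (P : (Fin n → ZFSet) → Prop) : Prop :=
  ∀ ρ : Fin n → ℕ, ∃ φ : GBFormula, ∀ v : ℕ → ZFSet, (∀ i, v i ∈ 𝕄.M) →
    (GBFormula.Sat 𝕄.M (classEnum 𝕄) v φ ↔ P fun i => v (ρ i))

/-- An `n`-ary operation under which `𝕄` is closed and whose graph is definable over `𝕄`; the value
is the variable `w 0` of the graph. -/
structure DefinableFun (n : ℕ) (t : (Fin n → ZFSet) → ZFSet) : Prop where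
  mem_model : ∀ w, (∀ i, w i ∈ 𝕄.M) → t w ∈ 𝕄.M
  graph : DefinablePred 𝕄 (n + 1) fun w => w 0 = t (Fin.tail w)

variable {𝕄} {n m : ℕ} {P Q : (Fin n → ZFSet) → Prop} {R : (Fin n → ZFSet) → ZFSet → Prop}
  {s t : (Fin n → ZFSet) → ZFSet}

theorem update_mem_of_mem {v : ℕ → ZFSet} {x : ZFSet} (hv : ∀ i, v i ∈ 𝕄.M) (hx : x ∈ 𝕄.M)
    (j : ℕ) :
    ∀ i, Function.update v j x i ∈ 𝕄.M := by
  intro i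
  rcases eq_or_ne i j with rfl | hij
  · rwa [Function.update_self]
  · rw [Function.update_of_ne hij]
    exact hv i

theorem cons_mem_of_mem {w : Fin n → ZFSet} {x : ZFSet} (hw : ∀ i, w i ∈ 𝕄.M) (hx : x ∈ 𝕄.M) :
    ∀ i, (Fin.cons x w : Fin (n + 1) → ZFSet) i ∈ 𝕄.M :=
  Fin.cases hx hw

namespace DefinablePred

theorem congr (hP : DefinablePred 𝕄 n P) (hPQ : ∀ w, (∀ i, w i ∈ 𝕄.M) → (P w ↔ Q w)) :
    DefinablePred 𝕄 n Q := by
  intro ρ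
  obtain ⟨φ, hφ⟩ := hP ρ
  exact ⟨φ, fun v hv => (hφ v hv).trans (hPQ _ fun i => hv _)⟩

theorem reindex (hP : DefinablePred 𝕄 n P) (ρ : Fin n → Fin m) :
    DefinablePred 𝕄 m fun w => P fun i => w (ρ i) :=
  fun ρ' => hP fun i => ρ' (ρ i)

theorem not (hP : DefinablePred 𝕄 n P) : DefinablePred 𝕄 n fun w => ¬ P w := by
  intro ρ
  obtain ⟨φ, hφ⟩ := hP ρ
  exact ⟨.not φ, fun v hv => not_congr (hφ v hv)⟩

theorem or (hP : DefinablePred 𝕄 n P) (hQ : DefinablePred 𝕄 n Q) :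
    DefinablePred 𝕄 n fun w => P w ∨ Q w := by
  intro ρ
  obtain ⟨φ, hφ⟩ := hP ρ
  obtain ⟨ψ, hψ⟩ := hQ ρ
  exact ⟨.or φ ψ, fun v hv => or_congr (hφ v hv) (hψ v hv)⟩

theorem and (hP : DefinablePred 𝕄 n P) (hQ : DefinablePred 𝕄 n Q) :
    DefinablePred 𝕄 n fun w => P w ∧ Q w :=
  (hP.not.or hQ.not).not.congr fun w _ => by tauto

theorem iff (hP : DefinablePred 𝕄 n P) (hQ : DefinablePred 𝕄 n Q) :
    DefinablePred 𝕄 n fun w => P w ↔ Q w :=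
  ((hP.and hQ).or (hP.not.and hQ.not)).congr fun w _ => by tauto

theorem exists_mem_model (hR : DefinablePred 𝕄 (n + 1) fun w => R (Fin.tail w) (w 0)) :
    DefinablePred 𝕄 n fun w => ∃ x ∈ 𝕄.M, R w x := by
  intro ρ
  obtain ⟨k, hk⟩ : ∃ k, ∀ i, ρ i ≠ k := by
    simpa only [Set.Nonempty, Set.mem_compl_iff, Set.mem_range, not_exists] using
      (Set.finite_range ρ).infinite_compl.nonempty
  obtain ⟨φ, hφ⟩ := hR (Fin.cons k ρ)
  refine ⟨.ex k φ, fun v hv => exists_congr fun x => and_congr_right fun hx => ?_⟩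
  have update_comp : (fun i => Function.update v k x (ρ i)) = fun i => v (ρ i) :=
    funext fun i => Function.update_of_ne (hk i) _ _
  rw [hφ _ (update_mem_of_mem hv hx k)]
  change R (fun i => Function.update v k x (ρ i)) (Function.update v k x k) ↔ _
  rw [update_comp, Function.update_self]

theorem forall_mem_model (hR : DefinablePred 𝕄 (n + 1) fun w => R (Fin.tail w) (w 0)) :
    DefinablePred 𝕄 n fun w => ∀ x ∈ 𝕄.M, R w x :=
  (exists_mem_model (R := fun w x => ¬ R w x) hR.not).not.congr fun w _ => by simp

theorem subst (hR : DefinablePred 𝕄 (n + 1) fun w => R (Fin.tail w) (w 0))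
    (ht : DefinableFun 𝕄 n t) : DefinablePred 𝕄 n fun w => R w (t w) := by
  refine (exists_mem_model (R := fun w x => x = t w ∧ R w x) (ht.graph.and hR)).congr fun w hw => ?_
  exact ⟨fun ⟨_, _, hx, h⟩ => hx ▸ h, fun h => ⟨t w, ht.mem_model w hw, rfl, h⟩⟩

end DefinablePred

namespace DefinableFun

theorem var (i : Fin n) : DefinableFun 𝕄 n fun w => w i :=
  ⟨fun _ hw => hw i, fun ρ => ⟨.eq (ρ 0) (ρ i.succ), fun _ _ => Iff.rfl⟩⟩

theorem reindex (ht : DefinableFun 𝕄 n t) (ρ : Fin n → Fin m) :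
    DefinableFun 𝕄 m fun w => t fun i => w (ρ i) :=
  ⟨fun _ hw => ht.mem_model _ fun _ => hw _, ht.graph.reindex (Fin.cons 0 fun i => (ρ i).succ)⟩

theorem lift (ht : DefinableFun 𝕄 n t) : DefinableFun 𝕄 (n + 1) fun w => t (Fin.tail w) :=
  ht.reindex Fin.succ

theorem lift_under_binder {F : (Fin n → ZFSet) → ZFSet → ZFSet}
    (hF : DefinableFun 𝕄 (n + 1) fun w => F (Fin.tail w) (w 0)) :
    DefinableFun 𝕄 (n + 2) fun w => F (Fin.tail (Fin.tail w)) (w 0) :=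
  hF.reindex (Fin.cons 0 fun i => i.succ.succ)

theorem apply_mem_model {F : (Fin n → ZFSet) → ZFSet → ZFSet}
    (hF : DefinableFun 𝕄 (n + 1) fun w => F (Fin.tail w) (w 0)) {w : Fin n → ZFSet}
    (hw : ∀ i, w i ∈ 𝕄.M) {x : ZFSet} (hx : x ∈ 𝕄.M) : F w x ∈ 𝕄.M :=
  hF.mem_model (Fin.cons x w) (cons_mem_of_mem hw hx)

end DefinableFun

namespace DefinablePred

theorem mem (hs : DefinableFun 𝕄 n s) (ht : DefinableFun 𝕄 n t) :
    DefinablePred 𝕄 n fun w => s w ∈ t w :=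
  have mem_var : DefinablePred 𝕄 (n + 2) fun w => w 1 ∈ w 0 :=
    fun ρ => ⟨.mem (ρ 1) (ρ 0), fun _ _ => Iff.rfl⟩
  subst (R := fun w x => x ∈ t w) (subst (R := fun w y => w 0 ∈ y) mem_var ht.lift) hs

theorem eq (hs : DefinableFun 𝕄 n s) (ht : DefinableFun 𝕄 n t) :
    DefinablePred 𝕄 n fun w => s w = t w :=
  subst (R := fun w x => x = t w) ht.graph hs

theorem mem_cls {C : Set ZFSet} (hC : C ∈ 𝕄.Cls) (ht : DefinableFun 𝕄 n t) :
    DefinablePred 𝕄 n fun w => t w ∈ C := by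
  rw [cls_eq_range_classEnum] at hC
  obtain ⟨j, rfl⟩ := hC
  exact subst (R := fun _ x => x ∈ classEnum 𝕄 j) (fun ρ => ⟨.cls (ρ 0) j, fun _ _ => Iff.rfl⟩) ht

theorem exists_mem (ht : DefinableFun 𝕄 n t)
    (hR : DefinablePred 𝕄 (n + 1) fun w => R (Fin.tail w) (w 0)) :
    DefinablePred 𝕄 n fun w => ∃ x ∈ t w, R w x :=
  (exists_mem_model (R := fun w x => x ∈ t w ∧ R w x) ((mem (.var 0) ht.lift).and hR)).congr
    fun w hw => exists_congr fun _ =>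
      ⟨And.right, fun h => ⟨𝕄.transitive _ (ht.mem_model w hw) _ h.1, h⟩⟩

theorem forall_mem (ht : DefinableFun 𝕄 n t)
    (hR : DefinablePred 𝕄 (n + 1) fun w => R (Fin.tail w) (w 0)) :
    DefinablePred 𝕄 n fun w => ∀ x ∈ t w, R w x :=
  (exists_mem ht (R := fun w x => ¬ R w x) hR.not).not.congr fun w _ => by simp

theorem setOf_mem_cls (hR : DefinablePred 𝕄 (n + 1) fun w => R (Fin.tail w) (w 0))
    {w : Fin n → ZFSet} (hw : ∀ i, w i ∈ 𝕄.M) : {x | x ∈ 𝕄.M ∧ R w x} ∈ 𝕄.Cls := by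
  obtain ⟨φ, hφ⟩ := hR fun i => i
  let v : ℕ → ZFSet := fun i =>
    if h : i < n + 1 then (Fin.cons ∅ w : Fin (n + 1) → ZFSet) ⟨i, h⟩ else ∅
  have hv : ∀ i, v i ∈ 𝕄.M := fun i => by
    by_cases h : i < n + 1
    · simpa only [v, dif_pos h] using cons_mem_of_mem hw 𝕄.empty_mem _
    · simpa only [v, dif_neg h] using 𝕄.empty_mem
  have hsat : ∀ x ∈ 𝕄.M,
      (GBFormula.Sat 𝕄.M (classEnum 𝕄) (Function.update v 0 x) φ ↔ R w x) := fun x hx => by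
    have tail_eq : Fin.tail (fun i : Fin (n + 1) => Function.update v 0 x i) = w :=
      funext fun i => by simp [Fin.tail, v, ← Fin.succ_mk]
    rw [hφ _ (update_mem_of_mem hv hx 0)]
    beta_reduce
    rw [tail_eq, Fin.val_zero, Function.update_self]
  have hcls := 𝕄.comprehension φ v (classEnum 𝕄) hv (classEnum_mem 𝕄)
  rwa [Set.ext fun x => and_congr_right (hsat x)] at hcls

end DefinablePred

@[simp]
theorem mem_zimage {f : ZFSet → ZFSet} {a y : ZFSet} : y ∈ zimage f a ↔ ∃ x ∈ a, f x = y :=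
  @ZFSet.mem_image f (Classical.allZFSetDefinable _) a y

namespace DefinableFun

theorem of_mem (hM : ∀ w, (∀ i, w i ∈ 𝕄.M) → t w ∈ 𝕄.M)
    (hmem : DefinablePred 𝕄 (n + 1) fun w => w 0 ∈ t (Fin.tail w)) : DefinableFun 𝕄 n t := by
  refine ⟨hM, ?_⟩
  have same_elements : DefinablePred 𝕄 (n + 1) fun w => ∀ u ∈ 𝕄.M, u ∈ w 0 ↔ u ∈ t (Fin.tail w) :=
    .forall_mem_model (.iff (.mem (.var 0) (.var 1))
      (hmem.reindex (Fin.cons 0 fun i => i.succ.succ)))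
  refine same_elements.congr fun w hw => ⟨fun h => ZFSet.ext fun u => ?_, fun h u _ => by rw [h]⟩
  exact ⟨fun hu => (h u (𝕄.transitive _ (hw 0) u hu)).1 hu,
    fun hu => (h u (𝕄.transitive _ (hM _ fun i => hw i.succ) u hu)).2 hu⟩

theorem const {c : ZFSet} (hc : c ∈ 𝕄.M) : DefinableFun 𝕄 n fun _ => c :=
  .of_mem (fun _ _ => hc) (.mem_cls (𝕄.sets_are_classes c hc) (.var 0))

theorem const_mem_model {c : ZFSet} (hc : DefinableFun 𝕄 0 fun _ => c) : c ∈ 𝕄.M :=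
  hc.mem_model Fin.elim0 fun i => i.elim0

theorem comp {g : ZFSet → ZFSet} (hg : DefinableFun 𝕄 1 fun w => g (w 0))
    (ht : DefinableFun 𝕄 n t) : DefinableFun 𝕄 n fun w => g (t w) :=
  ⟨fun w hw => hg.mem_model (fun _ => t w) fun _ => ht.mem_model w hw,
    .subst (R := fun w x => w 0 = g x) (hg.graph.reindex ![1, 0]) ht.lift⟩

theorem ite (hP : DefinablePred 𝕄 n P) (hs : DefinableFun 𝕄 n s) (ht : DefinableFun 𝕄 n t) :
    DefinableFun 𝕄 n fun w => if P w then s w else t w := by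
  refine ⟨fun w hw => ?_, ?_⟩
  · split_ifs
    exacts [hs.mem_model w hw, ht.mem_model w hw]
  · have hP' : DefinablePred 𝕄 (n + 1) fun w => P (Fin.tail w) := hP.reindex Fin.succ
    refine ((hP'.and hs.graph).or (hP'.not.and ht.graph)).congr fun w _ => ?_
    split_ifs <;> tauto

theorem unorderedPair (hs : DefinableFun 𝕄 n s) (ht : DefinableFun 𝕄 n t) :
    DefinableFun 𝕄 n fun w => {s w, t w} :=
  .of_mem (fun w hw => 𝕄.pair_mem _ (hs.mem_model w hw) _ (ht.mem_model w hw))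
    (((DefinablePred.eq (.var 0) hs.lift).or (.eq (.var 0) ht.lift)).congr fun w _ => by simp)

theorem singleton (hs : DefinableFun 𝕄 n s) : DefinableFun 𝕄 n fun w => {s w} := by
  simpa only [ZFSet.pair_eq_singleton] using hs.unorderedPair hs

theorem pair (hs : DefinableFun 𝕄 n s) (ht : DefinableFun 𝕄 n t) :
    DefinableFun 𝕄 n fun w => (s w).pair (t w) :=
  hs.singleton.unorderedPair (hs.unorderedPair ht)

theorem sUnion (hs : DefinableFun 𝕄 n s) : DefinableFun 𝕄 n fun w => (⋃₀ s w : ZFSet) := by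
  refine .of_mem (fun w hw => 𝕄.sUnion_mem _ (hs.mem_model w hw)) ?_
  simp only [ZFSet.mem_sUnion]
  exact .exists_mem hs.lift (.mem (.var 1) (.var 0))

theorem insert (hs : DefinableFun 𝕄 n s) (ht : DefinableFun 𝕄 n t) :
    DefinableFun 𝕄 n fun w => insert (s w) (t w) := by
  simp only [ZFSet.insert_eq]
  exact (hs.singleton.unorderedPair ht).sUnion

theorem sep (hs : DefinableFun 𝕄 n s)
    (hR : DefinablePred 𝕄 (n + 1) fun w => R (Fin.tail w) (w 0)) :
    DefinableFun 𝕄 n fun w => ZFSet.sep (R w) (s w) := by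
  refine .of_mem (fun w hw => ?_) ?_
  · obtain ⟨b, hb, mem_b⟩ := 𝕄.separation _ (hR.setOf_mem_cls hw) _ (hs.mem_model w hw)
    suffices h : ZFSet.sep (R w) (s w) = b from h ▸ hb
    ext x
    rw [mem_b, ZFSet.mem_sep]
    exact and_congr_right fun hx =>
      (and_iff_right (𝕄.transitive _ (hs.mem_model w hw) x hx)).symm
  · simp only [ZFSet.mem_sep]
    exact .and (.mem (.var 0) hs.lift) hR

theorem zimage {F : (Fin n → ZFSet) → ZFSet → ZFSet} (hs : DefinableFun 𝕄 n s)
    (hF : DefinableFun 𝕄 (n + 1) fun w => F (Fin.tail w) (w 0)) :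
    DefinableFun 𝕄 n fun w => zimage (F w) (s w) := by
  have graph : DefinablePred 𝕄 (n + 1) fun w => ∃ x ∈ 𝕄.M, w 0 = x.pair (F (Fin.tail w) x) :=
    .exists_mem_model (.eq (.var 1) (.pair (.var 0) hF.lift_under_binder))
  have image : DefinablePred 𝕄 (n + 1) fun w => ∃ x ∈ s (Fin.tail w), F (Fin.tail w) x = w 0 :=
    .exists_mem hs.lift (.eq hF.lift_under_binder (.var 1))
  refine .of_mem (fun w hw => ?_) (by simpa only [mem_zimage] using image)
  have mem_M : ∀ x ∈ s w, x ∈ 𝕄.M := 𝕄.transitive _ (hs.mem_model w hw)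
  have apply_mem_M : ∀ x ∈ s w, F w x ∈ 𝕄.M := fun x hx => hF.apply_mem_model hw (mem_M x hx)
  have pair_mem_M : ∀ x ∈ s w, x.pair (F w x) ∈ 𝕄.M := fun x hx =>
    (pair (.const (mem_M x hx)) (.const (apply_mem_M x hx))).const_mem_model
  have graph_mem_cls : {z | z ∈ 𝕄.M ∧ ∃ x ∈ 𝕄.M, z = x.pair (F w x)} ∈ 𝕄.Cls :=
    graph.setOf_mem_cls (R := fun w z => ∃ x ∈ 𝕄.M, z = x.pair (F w x)) hw
  obtain ⟨b, hb, cover⟩ := 𝕄.collection _ graph_mem_cls _ (hs.mem_model w hw) fun x hx =>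
    ⟨F w x, apply_mem_M x hx, pair_mem_M x hx, x, mem_M x hx, rfl⟩
  have image_subset : ∀ x ∈ s w, F w x ∈ b := fun x hx => by
    obtain ⟨y, hy, -, x', -, h⟩ := cover x hx
    obtain ⟨rfl, rfl⟩ := ZFSet.pair_inj.1 h
    exact hy
  have eq_sep : CF.zimage (F w) (s w) = ZFSet.sep (fun y => ∃ x ∈ s w, F w x = y) b := by
    ext y
    rw [mem_zimage, ZFSet.mem_sep]
    exact ⟨fun ⟨x, hx, h⟩ => ⟨h ▸ image_subset x hx, x, hx, h⟩, And.right⟩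
  exact eq_sep ▸ (sep (R := fun w y => ∃ x ∈ s w, F w x = y) (.const hb) image).mem_model w hw

end DefinableFun

end Definability

/-! ### Natural numbers and recursion on `ω` -/

universe u

section NaturalNumbers

variable {𝕄 : GBModel}

/-- The von Neumann natural number `k` as a set. -/
def natSet (k : ℕ) : ZFSet := (k : Ordinal).toZFSet

theorem natSet_zero : natSet 0 = ∅ := by
  rw [natSet, Nat.cast_zero, Ordinal.toZFSet_zero]

theorem natSet_succ (k : ℕ) : natSet (k + 1) = insert (natSet k) (natSet k) := by
  rw [natSet, Nat.cast_succ, Ordinal.toZFSet_add_one, natSet]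

theorem natSet_injective : Function.Injective natSet :=
  Ordinal.toZFSet_injective.comp Nat.cast_injective

theorem natSet_mem_natSet {j k : ℕ} : natSet j ∈ natSet k ↔ j < k := by
  rw [natSet, natSet, Ordinal.toZFSet_mem_toZFSet_iff, Nat.cast_lt]

theorem mem_natSet {x : ZFSet} {k : ℕ} : x ∈ natSet k ↔ ∃ j < k, natSet j = x := by
  induction k with
  | zero => simp [natSet_zero]
  | succ k ih =>
    rw [natSet_succ, ZFSet.mem_insert_iff, ih, Nat.exists_lt_succ_right, or_comm, eq_comm]

theorem mk_ofNat (k : ℕ) : ZFSet.mk (PSet.ofNat k) = natSet k := by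
  induction k with
  | zero => exact natSet_zero.symm
  | succ k ih =>
    rw [natSet_succ, ← ih]
    rfl

theorem mem_omega_iff {x : ZFSet} : x ∈ ZFSet.omega ↔ ∃ k, natSet k = x := by
  constructor
  · refine Quotient.inductionOn x fun y hy => ?_
    obtain ⟨⟨k⟩, hk⟩ := hy
    exact ⟨k, (mk_ofNat k).symm.trans (ZFSet.sound hk).symm⟩
  · rintro ⟨k, rfl⟩
    induction k with
    | zero => exact natSet_zero ▸ ZFSet.omega_zero
    | succ k ih => exact natSet_succ k ▸ ZFSet.omega_succ ih

theorem natSet_mem_omega (k : ℕ) : natSet k ∈ ZFSet.omega := mem_omega_iff.2 ⟨k, rfl⟩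

theorem natSet_mem_model (k : ℕ) : natSet k ∈ 𝕄.M :=
  𝕄.transitive _ 𝕄.omega_mem _ (natSet_mem_omega k)

/-- The function `k ↦ H^k(c)` on `ω`, as an operation on all sets with junk value `∅` outside
`ω`. -/
def iterateOn (H : ZFSet.{u} → ZFSet.{u}) (c : ZFSet.{u}) : ZFSet.{u} → ZFSet.{u} :=
  Function.extend natSet (fun k => H^[k] c) fun _ => ∅

/-- `f` is a set of pairs, each of which is either `⟨0, c⟩` or of the form `⟨j + 1, H y⟩` for some
`⟨j, y⟩ ∈ f`. These are the subsets of the graph of `k ↦ H^k(c)` that are closed under predecessors;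
they make that graph definable. -/
def IsIterateApprox (𝕄 : GBModel) (H : ZFSet → ZFSet) (c f : ZFSet) : Prop :=
  ∀ z ∈ f, z = (∅ : ZFSet).pair c ∨ ∃ j ∈ ZFSet.omega, ∃ y ∈ 𝕄.M,
    z = (insert j j).pair (H y) ∧ j.pair y ∈ f

variable {H : ZFSet → ZFSet} {c : ZFSet}

theorem iterateOn_natSet (k : ℕ) : iterateOn H c (natSet k) = H^[k] c :=
  natSet_injective.extend_apply _ _ k

theorem iterateOn_of_notMem_omega {x : ZFSet} (hx : x ∉ ZFSet.omega) : iterateOn H c x = ∅ :=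
  Function.extend_apply' _ _ x fun h => hx (mem_omega_iff.2 h)

theorem IsIterateApprox.eq_iterate {f : ZFSet} (hf : IsIterateApprox 𝕄 H c f) (k : ℕ) {y : ZFSet}
    (hy : (natSet k).pair y ∈ f) : y = H^[k] c := by
  induction k generalizing y with
  | zero =>
    rcases hf _ hy with h | ⟨j, hj, y', -, h, -⟩
    · exact (ZFSet.pair_inj.1 h).2
    · obtain ⟨i, rfl⟩ := mem_omega_iff.1 hj
      rw [← natSet_succ] at h
      exact absurd (natSet_injective (ZFSet.pair_inj.1 h).1) i.succ_ne_zero.symm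
  | succ k ih =>
    rcases hf _ hy with h | ⟨j, hj, y', -, h, hjy'⟩
    · rw [← natSet_zero] at h
      exact absurd (natSet_injective (ZFSet.pair_inj.1 h).1) k.succ_ne_zero
    · obtain ⟨i, rfl⟩ := mem_omega_iff.1 hj
      rw [← natSet_succ] at h
      obtain ⟨hki, rfl⟩ := ZFSet.pair_inj.1 h
      obtain rfl : k = i := Nat.succ_injective (natSet_injective hki)
      rw [ih hjy', Function.iterate_succ_apply']

theorem iterate_mem_model (hH : DefinableFun 𝕄 1 fun w => H (w 0)) (hc : c ∈ 𝕄.M) (k : ℕ) :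
    H^[k] c ∈ 𝕄.M := by
  induction k with
  | zero => exact hc
  | succ k ih =>
    rw [Function.iterate_succ_apply']
    exact (hH.comp (.const ih)).const_mem_model

theorem exists_isIterateApprox (hH : DefinableFun 𝕄 1 fun w => H (w 0)) (hc : c ∈ 𝕄.M) (k : ℕ) :
    ∃ f ∈ 𝕄.M, IsIterateApprox 𝕄 H c f ∧ (natSet k).pair (H^[k] c) ∈ f := by
  induction k with
  | zero =>
    refine ⟨{(∅ : ZFSet).pair c},
      (DefinableFun.singleton (.pair (.const 𝕄.empty_mem) (.const hc))).const_mem_model,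
      fun z hz => .inl (ZFSet.mem_singleton.1 hz), ?_⟩
    rw [natSet_zero]
    exact ZFSet.mem_singleton.2 rfl
  | succ k ih =>
    obtain ⟨f, hf, happrox, hk⟩ := ih
    refine ⟨insert ((natSet (k + 1)).pair (H^[k + 1] c)) f,
      (DefinableFun.insert (.pair (.const (natSet_mem_model _))
        (.const (iterate_mem_model hH hc _))) (.const hf)).const_mem_model,
      fun z hz => ?_, ZFSet.mem_insert _ _⟩
    rcases ZFSet.mem_insert_iff.1 hz with rfl | hz
    · refine .inr ⟨natSet k, natSet_mem_omega k, H^[k] c, iterate_mem_model hH hc k, ?_,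
        ZFSet.mem_insert_of_mem _ hk⟩
      rw [natSet_succ, Function.iterate_succ_apply']
    · exact (happrox z hz).imp_right fun ⟨j, hj, y, hy, h, hjy⟩ =>
        ⟨j, hj, y, hy, h, ZFSet.mem_insert_of_mem _ hjy⟩

theorem eq_iterateOn_iff (hH : DefinableFun 𝕄 1 fun w => H (w 0)) (hc : c ∈ 𝕄.M) {x y : ZFSet} :
    y = iterateOn H c x ↔
      (x ∈ ZFSet.omega ∧ ∃ f ∈ 𝕄.M, IsIterateApprox 𝕄 H c f ∧ x.pair y ∈ f) ∨
        (x ∉ ZFSet.omega ∧ y = ∅) := by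
  by_cases hx : x ∈ ZFSet.omega
  · simp only [hx, true_and, not_true_eq_false, false_and, or_false]
    obtain ⟨k, rfl⟩ := mem_omega_iff.1 hx
    rw [iterateOn_natSet]
    refine ⟨?_, fun ⟨f, _, hf, hk⟩ => hf.eq_iterate k hk⟩
    rintro rfl
    exact exists_isIterateApprox hH hc k
  · simp only [hx, false_and, not_false_eq_true, true_and, false_or]
    rw [iterateOn_of_notMem_omega hx]

theorem DefinableFun.iterateOn (hH : DefinableFun 𝕄 1 fun w => H (w 0)) (hc : c ∈ 𝕄.M) :
    DefinableFun 𝕄 1 fun w => iterateOn H c (w 0) := by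
  refine ⟨fun w _ => ?_, ?_⟩
  · by_cases hw : w 0 ∈ ZFSet.omega
    · obtain ⟨k, hk⟩ := mem_omega_iff.1 hw
      rw [← hk, iterateOn_natSet]
      exact iterate_mem_model hH hc k
    · rw [iterateOn_of_notMem_omega hw]
      exact 𝕄.empty_mem
  · have empty_definable {n : ℕ} : DefinableFun 𝕄 n fun _ => ∅ := .const 𝕄.empty_mem
    have omega_definable {n : ℕ} : DefinableFun 𝕄 n fun _ => ZFSet.omega := .const 𝕄.omega_mem
    have approx_definable : DefinablePred 𝕄 3 fun w => IsIterateApprox 𝕄 H c (w 0) :=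
      .forall_mem (.var 0) <| .or (.eq (.var 0) (.pair empty_definable (.const hc))) <|
        .exists_mem omega_definable <| .exists_mem_model <| .and
          (.eq (.var 2) (.pair (.insert (.var 1) (.var 1)) (hH.comp (.var 0))))
          (.mem (.pair (.var 1) (.var 0)) (.var 3))
    refine DefinablePred.congr ?_ fun w _ => (eq_iterateOn_iff hH hc).symm
    exact .or
      (.and (.mem (.var 1) omega_definable)
        (.exists_mem_model (.and approx_definable (.mem (.pair (.var 2) (.var 1)) (.var 0)))))
      (.and (.not (.mem (.var 1) omega_definable)) (.eq (.var 0) empty_definable))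

end NaturalNumbers

/-! ### Names -/

section Names

variable {S G : Set ZFSet} {σ τ p x : ZFSet}

theorem mem_sUnion_sUnion_of_pair_mem (h : τ.pair p ∈ σ) : τ ∈ (⋃₀ (⋃₀ σ : ZFSet) : ZFSet) :=
  ZFSet.mem_sUnion_of_mem (ZFSet.mem_singleton.2 rfl)
    (ZFSet.mem_sUnion_of_mem (ZFSet.mem_pair.2 (.inl rfl)) h)

theorem rank_lt_of_pair_mem (h : τ.pair p ∈ σ) : τ.rank < σ.rank :=
  calc τ.rank < ({τ} : ZFSet).rank := ZFSet.rank_lt_of_mem (ZFSet.mem_singleton.2 rfl)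
    _ < (τ.pair p).rank := ZFSet.rank_lt_of_mem (ZFSet.mem_pair.2 (.inl rfl))
    _ < σ.rank := ZFSet.rank_lt_of_mem h

theorem isName_iff : IsName S σ ↔ ∀ x ∈ σ, ∃ τ p : ZFSet, x = τ.pair p ∧ p ∈ S ∧ IsName S τ := by
  rw [IsName, IsNameAux]
  refine forall₂_congr fun x hx => exists₂_congr fun τ p => ⟨?_, ?_⟩
  · rintro ⟨h, hp, -, hτ⟩
    exact ⟨h, hp, hτ⟩
  · rintro ⟨rfl, hp, hτ⟩
    exact ⟨rfl, hp, rank_lt_of_pair_mem hx, hτ⟩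

theorem mem_nameEval_iff :
    x ∈ nameEval G σ ↔ ∃ τ p : ZFSet, τ.pair p ∈ σ ∧ p ∈ G ∧ nameEval G τ = x := by
  rw [nameEval, nameEvalAux, mem_zimage]
  constructor
  · rintro ⟨τ, hτ, h⟩
    obtain ⟨-, p, hp, hσ⟩ := ZFSet.mem_sep.1 hτ
    rw [dif_pos (rank_lt_of_pair_mem hσ)] at h
    exact ⟨τ, p, hσ, hp, h⟩
  · rintro ⟨τ, p, hσ, hp, h⟩
    refine ⟨τ, ZFSet.mem_sep.2 ⟨mem_sUnion_sUnion_of_pair_mem hσ, p, hp, hσ⟩, ?_⟩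
    rwa [dif_pos (rank_lt_of_pair_mem hσ)]

/-- The name `{⟨σ k, p k⟩ | k ∈ a}`. -/
def indexedName (σ p : ZFSet → ZFSet) (a : ZFSet) : ZFSet := zimage (fun k => (σ k).pair (p k)) a

/-- The canonical name for an element of `ω`, where `one` is the weakest condition; it satisfies
`(k + 1)ˇ = kˇ ∪ {⟨kˇ, one⟩}`. -/
def checkName (one : ZFSet.{u}) : ZFSet.{u} → ZFSet.{u} :=
  iterateOn (fun y => insert (y.pair one) y) ∅

theorem isName_indexedName {σ p : ZFSet → ZFSet} {a : ZFSet} (hσ : ∀ k ∈ a, IsName S (σ k))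
    (hp : ∀ k ∈ a, p k ∈ S) : IsName S (indexedName σ p a) := by
  refine isName_iff.2 fun x hx => ?_
  obtain ⟨k, hk, rfl⟩ := mem_zimage.1 hx
  exact ⟨_, _, rfl, hp k hk, hσ k hk⟩

theorem mem_nameEval_indexedName {σ p : ZFSet → ZFSet} {a : ZFSet} :
    x ∈ nameEval G (indexedName σ p a) ↔ ∃ k ∈ a, p k ∈ G ∧ nameEval G (σ k) = x := by
  rw [mem_nameEval_iff]
  constructor
  · rintro ⟨τ, q, hmem, hq, h⟩
    obtain ⟨k, hk, hkτ⟩ := mem_zimage.1 hmem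
    obtain ⟨rfl, rfl⟩ := ZFSet.pair_inj.1 hkτ
    exact ⟨k, hk, hq, h⟩
  · rintro ⟨k, hk, hp, h⟩
    exact ⟨_, _, mem_zimage.2 ⟨k, hk, rfl⟩, hp, h⟩

theorem DefinableFun.indexedName {𝕄 : GBModel} {n : ℕ} {σ p : (Fin n → ZFSet) → ZFSet → ZFSet}
    {a : (Fin n → ZFSet) → ZFSet} (hσ : DefinableFun 𝕄 (n + 1) fun w => σ (Fin.tail w) (w 0))
    (hp : DefinableFun 𝕄 (n + 1) fun w => p (Fin.tail w) (w 0)) (ha : DefinableFun 𝕄 n a) :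
    DefinableFun 𝕄 n fun w => indexedName (σ w) (p w) (a w) :=
  .zimage (F := fun w k => (σ w k).pair (p w k)) ha (.pair hσ hp)

theorem DefinableFun.checkName {𝕄 : GBModel} {one : ZFSet} (hone : one ∈ 𝕄.M) :
    DefinableFun 𝕄 1 fun w => checkName one (w 0) :=
  .iterateOn (.insert (.pair (.var 0) (.const hone)) (.var 0)) 𝕄.empty_mem

theorem checkName_natSet (one : ZFSet) (k : ℕ) :
    checkName one (natSet k) = indexedName (checkName one) (fun _ => one) (natSet k) := by
  induction k with
  | zero =>
    rw [checkName, iterateOn_natSet, natSet_zero]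
    ext
    simp [indexedName]
  | succ k ih =>
    have checkName_succ : checkName one (natSet (k + 1)) =
        insert ((checkName one (natSet k)).pair one) (checkName one (natSet k)) := by
      simp only [checkName, iterateOn_natSet, Function.iterate_succ_apply']
    ext z
    rw [checkName_succ, ZFSet.mem_insert_iff]
    nth_rewrite 2 [ih]
    simp [indexedName, natSet_succ, eq_comm]

theorem isName_checkName {one : ZFSet} (hone : one ∈ S) (k : ℕ) :
    IsName S (checkName one (natSet k)) := by
  induction k using Nat.strong_induction_on with
  | _ k ih =>
    rw [checkName_natSet]
    refine isName_indexedName (fun x hx => ?_) fun _ _ => hone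
    obtain ⟨j, hj, rfl⟩ := mem_natSet.1 hx
    exact ih j hj

theorem nameEval_checkName {one : ZFSet} (hone : one ∈ G) (k : ℕ) :
    nameEval G (checkName one (natSet k)) = natSet k := by
  induction k using Nat.strong_induction_on with
  | _ k ih =>
    ext x
    rw [checkName_natSet, mem_nameEval_indexedName]
    constructor
    · rintro ⟨y, hy, -, rfl⟩
      obtain ⟨j, hj, rfl⟩ := mem_natSet.1 hy
      rwa [ih j hj]
    · intro hx
      obtain ⟨j, hj, rfl⟩ := mem_natSet.1 hx
      exact ⟨_, hx, hone, ih j hj⟩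

end Names

/-! ### Set functions -/

section Functions

variable {𝕄 : GBModel} {f i c a I : ZFSet} {b : ZFSet → ZFSet}

theorem pair_zapp_mem (hi : i ∈ pdom f) : i.pair (zapp f i) ∈ f := by
  have exists_pair : ∃ c : ZFSet, i.pair c ∈ f := hi
  rw [zapp, dif_pos exists_pair]
  exact exists_pair.choose_spec

theorem zapp_of_notMem_pdom (hi : i ∉ pdom f) : zapp f i = ∅ := dif_neg hi

namespace ZFuncOn

theorem mem_pdom_iff (hf : ZFuncOn f I) : i ∈ pdom f ↔ i ∈ I := by
  refine ⟨fun ⟨c, hc⟩ => ?_, hf.2.2 i⟩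
  obtain ⟨i', c', h, hi'⟩ := hf.1 _ hc
  rwa [(ZFSet.pair_inj.1 h).1]

theorem pair_mem_iff (hf : ZFuncOn f I) : i.pair c ∈ f ↔ i ∈ I ∧ zapp f i = c := by
  constructor
  · intro h
    have hi : i ∈ pdom f := ⟨c, h⟩
    exact ⟨hf.mem_pdom_iff.1 hi, hf.2.1 i _ _ (pair_zapp_mem hi) h⟩
  · rintro ⟨hi, rfl⟩
    exact pair_zapp_mem (hf.mem_pdom_iff.2 hi)

end ZFuncOn

/-- The restriction of the operation `b` to the set `a`, as a set of pairs. -/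
def graphOn (b : ZFSet → ZFSet) (a : ZFSet) : ZFSet := zimage (fun i => i.pair (b i)) a

theorem pair_mem_graphOn : i.pair c ∈ graphOn b a ↔ i ∈ a ∧ b i = c := by
  simp only [graphOn, mem_zimage, ZFSet.pair_inj]
  exact ⟨fun ⟨_, hj, hji, hc⟩ => hji ▸ ⟨hj, hc⟩, fun ⟨hi, hc⟩ => ⟨i, hi, rfl, hc⟩⟩

theorem zfuncOn_graphOn (b : ZFSet → ZFSet) (a : ZFSet) : ZFuncOn (graphOn b a) a := by
  refine ⟨fun x hx => ?_, fun i c c' hc hc' => ?_, fun i hi => ⟨b i, pair_mem_graphOn.2 ⟨hi, rfl⟩⟩⟩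
  · obtain ⟨i, hi, rfl⟩ := mem_zimage.1 hx
    exact ⟨i, b i, rfl, hi⟩
  · exact (pair_mem_graphOn.1 hc).2.symm.trans (pair_mem_graphOn.1 hc').2

theorem zapp_graphOn (hi : i ∈ a) : zapp (graphOn b a) i = b i :=
  ((zfuncOn_graphOn b a).pair_mem_iff.1 (pair_mem_graphOn.2 ⟨hi, rfl⟩)).2

theorem graphOn_natSet_mem_model (hb : ∀ i, b i ∈ 𝕄.M) (m : ℕ) : graphOn b (natSet m) ∈ 𝕄.M := by
  induction m with
  | zero =>
    have graphOn_empty : graphOn b (natSet 0) = ∅ := by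
      ext
      simp [graphOn, natSet_zero]
    exact graphOn_empty ▸ 𝕄.empty_mem
  | succ m ih =>
    have graphOn_succ : graphOn b (natSet (m + 1)) =
        insert ((natSet m).pair (b (natSet m))) (graphOn b (natSet m)) := by
      ext
      simp [graphOn, natSet_succ, eq_comm]
    rw [graphOn_succ]
    exact (DefinableFun.insert (.pair (.const (natSet_mem_model m)) (.const (hb _)))
      (.const ih)).const_mem_model

theorem DefinableFun.graphOn {n : ℕ} {b : (Fin n → ZFSet) → ZFSet → ZFSet}
    {a : (Fin n → ZFSet) → ZFSet} (hb : DefinableFun 𝕄 (n + 1) fun w => b (Fin.tail w) (w 0))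
    (ha : DefinableFun 𝕄 n a) : DefinableFun 𝕄 n fun w => graphOn (b w) (a w) :=
  .zimage (F := fun w i => i.pair (b w i)) ha (.pair (.var 0) hb)

end Functions

/-! ### The power class of `ω` -/

section PowOmega

variable {𝕄 : GBModel}

theorem powOmega_mem_cls (𝕄 : GBModel) : PowOmega 𝕄 ∈ 𝕄.Cls :=
  DefinablePred.setOf_mem_cls (R := fun _ x => ∀ k ∈ x, k ∈ ZFSet.omega)
    (.forall_mem (.var 0) (.mem (.var 0) (.const 𝕄.omega_mem)))
    (w := Fin.elim0) fun i => i.elim0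

theorem powOmega_ne_toSet {z f : ZFSet} (hz : z ∈ 𝕄.M) (hf : f ∈ 𝕄.M)
    (hinj : ZInjFun f z.toSet ZFSet.omega.toSet) : z.toSet ≠ PowOmega 𝕄 := by
  intro hpow
  obtain ⟨maps_into_omega, -, total, injective⟩ := hinj
  set diagonal : ZFSet := ZFSet.sep (fun k => ∃ a ∈ z, a.pair k ∈ f ∧ k ∉ a) ZFSet.omega
    with diagonal_def
  have diagonal_mem_pow : diagonal ∈ PowOmega 𝕄 := by
    refine ⟨DefinableFun.const_mem_model ?_, fun k hk => (ZFSet.mem_sep.1 hk).1⟩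
    exact .sep (.const 𝕄.omega_mem) (.exists_mem (.const hz)
      (.and (.mem (.pair (.var 0) (.var 1)) (.const hf)) (.not (.mem (.var 1) (.var 0)))))
  have diagonal_mem : diagonal ∈ z.toSet := hpow ▸ diagonal_mem_pow
  obtain ⟨k, hk⟩ := total diagonal diagonal_mem
  have k_mem_omega : k ∈ ZFSet.omega := by
    obtain ⟨a, k', h, -, hk'⟩ := maps_into_omega _ hk
    exact (ZFSet.pair_inj.1 h).2 ▸ hk'
  have mem_diagonal_iff : k ∈ diagonal ↔ k ∉ diagonal := by
    conv_lhs => rw [diagonal_def, ZFSet.mem_sep]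
    constructor
    · rintro ⟨-, a, -, hak, hka⟩
      rwa [← injective a diagonal k hak hk]
    · exact fun h => ⟨k_mem_omega, diagonal, diagonal_mem, hk, h⟩
  exact iff_not_self mem_diagonal_iff

end PowOmega

/-! ### Conditions -/

section Conditions

variable {𝕄 : GBModel} {b c k s x : ZFSet} {j : ℕ}

/-- The characteristic function of `x ∩ ω`, where `1 = {∅}`. -/
def charFun (x : ZFSet) : ZFSet := graphOn (fun k => if k ∈ x then {∅} else ∅) ZFSet.omega

/-- The condition of `ℚ` with domain `a + 1` whose entry at `a` is the function `{⟨k, 1⟩}` and whose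
other entries are empty. -/
def digitCond (a k : ZFSet) : ZFSet :=
  graphOn (fun i => if i = a then {k.pair {∅}} else ∅) (insert a a)

theorem DefinableFun.singleton_empty {n : ℕ} : DefinableFun 𝕄 n fun _ => {∅} :=
  .singleton (.const 𝕄.empty_mem)

theorem DefinableFun.charFun {n : ℕ} {t : (Fin n → ZFSet) → ZFSet} (ht : DefinableFun 𝕄 n t) :
    DefinableFun 𝕄 n fun w => charFun (t w) :=
  .graphOn (b := fun w k => if k ∈ t w then {∅} else ∅)
    (.ite (.mem (.var 0) ht.lift) .singleton_empty (.const 𝕄.empty_mem)) (.const 𝕄.omega_mem)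

theorem DefinableFun.digitCond {n : ℕ} {s t : (Fin n → ZFSet) → ZFSet} (hs : DefinableFun 𝕄 n s)
    (ht : DefinableFun 𝕄 n t) : DefinableFun 𝕄 n fun w => digitCond (s w) (t w) :=
  .graphOn (b := fun w i => if i = s w then {(t w).pair {∅}} else ∅)
    (.ite (.eq (.var 0) hs.lift) (.singleton (.pair ht.lift .singleton_empty)) (.const 𝕄.empty_mem))
    (.insert hs hs)

theorem pcond_empty : PCond 𝕄 ∅ :=
  ⟨𝕄.empty_mem, fun _ hx => absurd hx (ZFSet.notMem_empty _),
    fun _ _ _ h => absurd h (ZFSet.notMem_empty _)⟩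

theorem pcond_singleton (hk : k ∈ ZFSet.omega) : PCond 𝕄 {k.pair {∅}} := by
  refine ⟨DefinableFun.const_mem_model ?_, fun x hx => ?_, fun a d d' hd hd' => ?_⟩
  · exact .singleton (.pair (.const (𝕄.transitive _ 𝕄.omega_mem k hk)) .singleton_empty)
  · exact ⟨k, {∅}, ZFSet.mem_singleton.1 hx, hk, .inr rfl⟩
  · rw [ZFSet.mem_singleton, ZFSet.pair_inj] at hd hd'
    exact hd.2.trans hd'.2.symm

theorem pcond_charFun (hx : x ∈ 𝕄.M) : PCond 𝕄 (charFun x) := by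
  refine ⟨(DefinableFun.charFun (.const hx)).const_mem_model, fun z hz => ?_,
    (zfuncOn_graphOn _ _).2.1⟩
  obtain ⟨k, d, rfl, hk⟩ := (zfuncOn_graphOn _ _).1 z hz
  obtain ⟨-, rfl⟩ := pair_mem_graphOn.1 hz
  refine ⟨k, _, rfl, hk, ?_⟩
  split_ifs
  exacts [.inr rfl, .inl rfl]

theorem empty_ne_singleton_empty : (∅ : ZFSet) ≠ {∅} :=
  (ne_of_mem_of_not_mem' (ZFSet.mem_singleton.2 rfl) (ZFSet.notMem_empty ∅)).symm

theorem singleton_subset_charFun (hk : k ∈ ZFSet.omega) :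
    {k.pair {∅}} ⊆ charFun x ↔ k ∈ x := by
  have singleton_subset_iff : {k.pair {∅}} ⊆ charFun x ↔ k.pair {∅} ∈ charFun x := by
    simp [ZFSet.subset_def]
  rw [singleton_subset_iff, charFun, pair_mem_graphOn, and_iff_right hk]
  split_ifs with h <;> simp [h, empty_ne_singleton_empty]

theorem PCond.exists_subset_charFun (hb : PCond 𝕄 b) : ∃ x ∈ PowOmega 𝕄, b ⊆ charFun x := by
  obtain ⟨hbM, hpairs, hfun⟩ := hb
  refine ⟨ZFSet.sep (fun k => k.pair {∅} ∈ b) ZFSet.omega, ⟨DefinableFun.const_mem_model ?_,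
    fun k hk => (ZFSet.mem_sep.1 hk).1⟩, fun z hz => ?_⟩
  · exact .sep (.const 𝕄.omega_mem) (.mem (.pair (.var 0) .singleton_empty) (.const hbM))
  · obtain ⟨k, d, rfl, hk, hd⟩ := hpairs z hz
    refine pair_mem_graphOn.2 ⟨hk, ?_⟩
    split_ifs with h
    · exact hfun k _ _ (ZFSet.mem_sep.1 h).2 hz
    · exact (hd.resolve_right fun hd => h (ZFSet.mem_sep.2 ⟨hk, hd ▸ hz⟩)).symm

theorem PCond.eq_charFun (hc : PCond 𝕄 c) (h : charFun x ⊆ c) : c = charFun x := by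
  refine ZFSet.ext fun z => ⟨fun hz => ?_, fun hz => h hz⟩
  obtain ⟨k, d, rfl, hk, -⟩ := hc.2.1 z hz
  have hkd := hc.2.2 k _ _ (h (pair_mem_graphOn.2 ⟨hk, rfl⟩)) hz
  exact pair_mem_graphOn.2 ⟨hk, hkd⟩

theorem qcond_graphOn_natSet {d : ZFSet → ZFSet} (hd : ∀ i, PCond 𝕄 (d i)) (m : ℕ) :
    QCond 𝕄 (graphOn d (natSet m)) := by
  refine ⟨graphOn_natSet_mem_model (fun i => (hd i).1) m, natSet m, natSet_mem_omega m,
    zfuncOn_graphOn _ _, fun i hi => ?_⟩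
  rw [zapp_graphOn hi]
  exact hd i

theorem qcond_empty : QCond 𝕄 ∅ := by
  convert qcond_graphOn_natSet (fun _ => pcond_empty) 0
  ext
  simp [graphOn, natSet_zero]

theorem qLe_empty (s : ZFSet) : QLe s ∅ :=
  have notMem_pdom (i : ZFSet) : i ∉ pdom ∅ := fun ⟨_, h⟩ => ZFSet.notMem_empty _ h
  ⟨fun i hi => absurd hi (notMem_pdom i), fun i hi => absurd hi (notMem_pdom i)⟩

theorem qcond_digitCond (j : ℕ) (hk : k ∈ ZFSet.omega) : QCond 𝕄 (digitCond (natSet j) k) := by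
  rw [digitCond, ← natSet_succ]
  refine qcond_graphOn_natSet (fun i => ?_) (j + 1)
  split_ifs
  exacts [pcond_singleton hk, pcond_empty]

namespace QCond

theorem exists_zfuncOn_natSet (hs : QCond 𝕄 s) : ∃ m, ZFuncOn s (natSet m) := by
  obtain ⟨-, n, hn, hsn, -⟩ := hs
  obtain ⟨m, rfl⟩ := mem_omega_iff.1 hn
  exact ⟨m, hsn⟩

theorem exists_natSet_notMem_pdom (hs : QCond 𝕄 s) : ∃ j, natSet j ∉ pdom s := by
  obtain ⟨m, hsm⟩ := hs.exists_zfuncOn_natSet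
  exact ⟨m, fun h => lt_irrefl m (natSet_mem_natSet.1 (hsm.mem_pdom_iff.1 h))⟩

theorem pcond_zapp (hs : QCond 𝕄 s) (i : ZFSet) : PCond 𝕄 (zapp s i) := by
  by_cases hi : i ∈ pdom s
  · obtain ⟨-, n, -, hsn, hsP⟩ := hs
    exact hsP i (hsn.mem_pdom_iff.1 hi)
  · rw [zapp_of_notMem_pdom hi]
    exact pcond_empty

theorem zapp_eq_of_pair_mem (hs : QCond 𝕄 s) {i : ZFSet} (h : i.pair c ∈ s) : zapp s i = c := by
  obtain ⟨m, hsm⟩ := hs.exists_zfuncOn_natSet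
  exact (hsm.pair_mem_iff.1 h).2

theorem exists_qLe_pair_mem (hs : QCond 𝕄 s) (hc : PCond 𝕄 c) (h : zapp s (natSet j) ⊆ c) :
    ∃ s', QCond 𝕄 s' ∧ QLe s' s ∧ (natSet j).pair c ∈ s' := by
  obtain ⟨m, hsm⟩ := hs.exists_zfuncOn_natSet
  let entry : ZFSet → ZFSet := fun i => if i = natSet j then c else zapp s i
  let N := max m (j + 1)
  have pdom_subset : ∀ i ∈ pdom s, i ∈ natSet N := fun i hi => by
    obtain ⟨l, hl, rfl⟩ := mem_natSet.1 (hsm.mem_pdom_iff.1 hi)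
    exact natSet_mem_natSet.2 (hl.trans_le (le_max_left _ _))
  refine ⟨graphOn entry (natSet N), qcond_graphOn_natSet (fun i => ?_) N,
    ⟨fun i hi => (zfuncOn_graphOn _ _).mem_pdom_iff.2 (pdom_subset i hi), fun i hi => ?_⟩,
    pair_mem_graphOn.2 ⟨natSet_mem_natSet.2 (le_max_right m (j + 1)), if_pos rfl⟩⟩
  · unfold entry
    split_ifs
    exacts [hc, hs.pcond_zapp i]
  · rw [zapp_graphOn (pdom_subset i hi)]
    unfold entry
    split_ifs with hij
    exacts [hij ▸ h, subset_rfl]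

theorem qLe_digitCond_iff (hs : QCond 𝕄 s) (hj : natSet j ∈ pdom s) :
    QLe s (digitCond (natSet j) k) ↔ {k.pair {∅}} ⊆ zapp s (natSet j) := by
  obtain ⟨m, hsm⟩ := hs.exists_zfuncOn_natSet
  have mem_pdom_digitCond {i : ZFSet} :
      i ∈ pdom (digitCond (natSet j) k) ↔ i ∈ insert (natSet j) (natSet j) :=
    (zfuncOn_graphOn _ _).mem_pdom_iff
  have zapp_digitCond {i : ZFSet} (hi : i ∈ pdom (digitCond (natSet j) k)) :
      zapp (digitCond (natSet j) k) i = if i = natSet j then {k.pair {∅}} else ∅ :=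
    zapp_graphOn (mem_pdom_digitCond.1 hi)
  constructor
  · intro h
    have hj' := mem_pdom_digitCond.2 (ZFSet.mem_insert (natSet j) _)
    simpa only [zapp_digitCond hj', if_pos] using h.2 _ hj'
  · refine fun h => ⟨fun i hi => ?_, fun i hi => ?_⟩
    · rw [mem_pdom_digitCond, ← natSet_succ] at hi
      obtain ⟨l, hl, rfl⟩ := mem_natSet.1 hi
      have hjm : j < m := natSet_mem_natSet.1 (hsm.mem_pdom_iff.1 hj)
      exact hsm.mem_pdom_iff.2 (natSet_mem_natSet.2 ((Nat.le_of_lt_succ hl).trans_lt hjm))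
    · rw [zapp_digitCond hi]
      split_ifs with hij
      exacts [hij ▸ h, ZFSet.empty_subset _]

end QCond

end Conditions

/-! ### Generic filters -/

section Genericity

variable {𝕄 : GBModel} {G S : Set ZFSet} {le le' : ZFSet → ZFSet → Prop} {s x : ZFSet} {j : ℕ}

namespace IsGeneric

theorem exists_mem_of_dense {P : ZFSet → Prop} (hG : IsGeneric 𝕄 S le G) (hS : S ∈ 𝕄.Cls)
    (hP : DefinablePred 𝕄 1 fun w => P (w 0)) (hdense : ∀ s ∈ S, ∃ s' ∈ S, le s' s ∧ P s') :
    ∃ s ∈ G, P s := by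
  have cls : {s | s ∈ 𝕄.M ∧ s ∈ S ∧ P s} ∈ 𝕄.Cls :=
    DefinablePred.setOf_mem_cls (R := fun _ s => s ∈ S ∧ P s) (.and (.mem_cls hS (.var 0)) hP)
      (w := Fin.elim0) fun i => i.elim0
  obtain ⟨s, hsG, -, -, hs⟩ := hG.2 _ cls ⟨fun s hs => hs.2.1, fun s hs => by
    obtain ⟨s', hs', hle, hPs'⟩ := hdense s hs
    exact ⟨s', ⟨𝕄.classes_sub _ hS hs', hs', hPs'⟩, hle⟩⟩
  exact ⟨s, hsG, hs⟩

theorem congr_le (hG : IsGeneric 𝕄 S le G) (h : ∀ s' ∈ S, ∀ s ∈ S, (le s' s ↔ le' s' s)) :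
    IsGeneric 𝕄 S le' G := by
  obtain ⟨⟨hGS, hne, hup, hdir⟩, hmeet⟩ := hG
  refine ⟨⟨hGS, hne, fun p hp q hq hpq => hup p hp q hq ((h p (hGS hp) q hq).2 hpq), ?_⟩, ?_⟩
  · intro p hp q hq
    obtain ⟨r, hr, hrp, hrq⟩ := hdir p hp q hq
    exact ⟨r, hr, (h r (hGS hr) p (hGS hp)).1 hrp, (h r (hGS hr) q (hGS hq)).1 hrq⟩
  · rintro D hD ⟨hDS, hdense⟩
    refine hmeet D hD ⟨hDS, fun p hp => ?_⟩
    obtain ⟨q, hq, hqp⟩ := hdense p hp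
    exact ⟨q, hq, (h q (hDS hq) p hp).2 hqp⟩

end IsGeneric

theorem empty_mem_of_isFilterOn (hG : IsFilterOn {s | QCond 𝕄 s} QLe G) : ∅ ∈ G := by
  obtain ⟨-, ⟨s, hs⟩, hup, -⟩ := hG
  exact hup s hs ∅ qcond_empty (qLe_empty s)

theorem digitCond_mem_iff {k : ZFSet} (hG : IsFilterOn {s | QCond 𝕄 s} QLe G) (hs : s ∈ G)
    (hjx : (natSet j).pair (charFun x) ∈ s) (hk : k ∈ ZFSet.omega) :
    digitCond (natSet j) k ∈ G ↔ k ∈ x := by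
  obtain ⟨hGQ, -, hup, hdir⟩ := hG
  have hj : natSet j ∈ pdom s := ⟨_, hjx⟩
  have hsx : zapp s (natSet j) = charFun x := (hGQ hs).zapp_eq_of_pair_mem hjx
  constructor
  · intro hdigit
    obtain ⟨r, hr, hrs, hrdigit⟩ := hdir s hs _ hdigit
    have hrx : zapp r (natSet j) = charFun x :=
      ((hGQ hr).pcond_zapp _).eq_charFun (hsx ▸ hrs.2 _ hj)
    rwa [(hGQ hr).qLe_digitCond_iff (hrs.1 hj), hrx, singleton_subset_charFun hk] at hrdigit
  · intro hkx
    refine hup s hs _ (qcond_digitCond j hk) (((hGQ hs).qLe_digitCond_iff hj).2 ?_)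
    rwa [hsx, singleton_subset_charFun hk]

theorem exists_mem_powOmega_pair_charFun_mem (hG : IsGeneric 𝕄 {s | QCond 𝕄 s} QLe G)
    (hQ : {s | QCond 𝕄 s} ∈ 𝕄.Cls) (j : ℕ) :
    ∃ s ∈ G, ∃ x ∈ PowOmega 𝕄, (natSet j).pair (charFun x) ∈ s := by
  refine hG.exists_mem_of_dense hQ (DefinablePred.congr (.exists_mem_model (.and
    (.mem_cls (powOmega_mem_cls 𝕄) (.var 0))
    (.mem (.pair (.const (natSet_mem_model j)) (.charFun (.var 0))) (.var 1))))
    fun w _ => exists_congr fun x => ⟨And.right, fun h => ⟨h.1.1, h⟩⟩) fun s hs => ?_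
  obtain ⟨x, hx, hsx⟩ := (hs.pcond_zapp (natSet j)).exists_subset_charFun
  obtain ⟨s', hs', hle, hjx⟩ := hs.exists_qLe_pair_mem (pcond_charFun hx.1) hsx
  exact ⟨s', hs', hle, x, hx, hjx⟩

theorem exists_mem_omega_pair_charFun_mem (hG : IsGeneric 𝕄 {s | QCond 𝕄 s} QLe G)
    (hQ : {s | QCond 𝕄 s} ∈ 𝕄.Cls) (hx : x ∈ 𝕄.M) :
    ∃ s ∈ G, ∃ i ∈ ZFSet.omega, i.pair (charFun x) ∈ s := by
  refine hG.exists_mem_of_dense hQ (.exists_mem (.const 𝕄.omega_mem)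
    (.mem (.pair (.var 0) (.charFun (.const hx))) (.var 1))) fun s hs => ?_
  obtain ⟨j, hj⟩ := hs.exists_natSet_notMem_pdom
  have hsj : zapp s (natSet j) ⊆ charFun x := by
    rw [zapp_of_notMem_pdom hj]
    exact ZFSet.empty_subset _
  obtain ⟨s', hs', hle, hjx⟩ := hs.exists_qLe_pair_mem (pcond_charFun hx) hsj
  exact ⟨s', hs', hle, natSet j, natSet_mem_omega j, hjx⟩

end Genericity

/-! ### The name for `𝒫(ω)^M` -/

section RealsName

variable {𝕄 : GBModel} {G : Set ZFSet} {x : ZFSet}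

/-- The name for the set of those `k ∈ ω` at which the generic function of coordinate `a` has value
`1`. -/
def realName (a : ZFSet) : ZFSet := indexedName (checkName ∅) (digitCond a) ZFSet.omega

/-- The name for the collection of the reals named by `realName a`, for `a ∈ ω`. -/
def realsName : ZFSet := indexedName realName (fun _ => ∅) ZFSet.omega

theorem realsName_mem_model (𝕄 : GBModel) : realsName ∈ 𝕄.M := by
  have realName_definable : DefinableFun 𝕄 1 fun w => realName (w 0) :=
    .indexedName (σ := fun _ => checkName ∅) (p := fun w => digitCond (w 0))
      ((DefinableFun.checkName 𝕄.empty_mem).comp (.var 0)) (.digitCond (.var 1) (.var 0))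
      (.const 𝕄.omega_mem)
  exact (DefinableFun.indexedName (σ := fun _ => realName) (p := fun _ _ => ∅) realName_definable
    (.const 𝕄.empty_mem) (.const 𝕄.omega_mem)).const_mem_model

theorem isName_realsName (𝕄 : GBModel) : IsName {s | QCond 𝕄 s} realsName := by
  refine isName_indexedName (fun a ha => ?_) fun _ _ => qcond_empty
  obtain ⟨j, rfl⟩ := mem_omega_iff.1 ha
  refine isName_indexedName (fun k hk => ?_) fun k hk => qcond_digitCond j hk
  obtain ⟨l, rfl⟩ := mem_omega_iff.1 hk
  exact isName_checkName qcond_empty l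

theorem nameEval_realName {s : ZFSet} {j : ℕ} (hG : IsFilterOn {s | QCond 𝕄 s} QLe G) (hs : s ∈ G)
    (hjx : (natSet j).pair (charFun x) ∈ s) (hx : x ⊆ ZFSet.omega) :
    nameEval G (realName (natSet j)) = x := by
  ext y
  rw [realName, mem_nameEval_indexedName]
  constructor
  · rintro ⟨k, hk, hdigit, rfl⟩
    obtain ⟨l, rfl⟩ := mem_omega_iff.1 hk
    rw [nameEval_checkName (empty_mem_of_isFilterOn hG)]
    exact (digitCond_mem_iff hG hs hjx hk).1 hdigit
  · intro hy
    obtain ⟨l, rfl⟩ := mem_omega_iff.1 (hx hy)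
    exact ⟨_, hx hy, (digitCond_mem_iff hG hs hjx (hx hy)).2 hy,
      nameEval_checkName (empty_mem_of_isFilterOn hG) l⟩

theorem nameEval_realsName (hG : IsGeneric 𝕄 {s | QCond 𝕄 s} QLe G)
    (hQ : {s | QCond 𝕄 s} ∈ 𝕄.Cls) : (nameEval G realsName).toSet = PowOmega 𝕄 := by
  have empty_mem := empty_mem_of_isFilterOn hG.1
  ext x
  change x ∈ nameEval G realsName ↔ _
  rw [realsName, mem_nameEval_indexedName]
  constructor
  · rintro ⟨a, ha, -, rfl⟩
    obtain ⟨j, rfl⟩ := mem_omega_iff.1 ha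
    obtain ⟨s, hs, x, hx, hjx⟩ := exists_mem_powOmega_pair_charFun_mem hG hQ j
    rwa [nameEval_realName hG.1 hs hjx hx.2]
  · intro hx
    obtain ⟨s, hs, i, hi, hix⟩ := exists_mem_omega_pair_charFun_mem hG hQ hx.1
    obtain ⟨j, rfl⟩ := mem_omega_iff.1 hi
    exact ⟨_, hi, empty_mem, nameEval_realName hG.1 hs hix hx.2⟩

end RealsName

theorem product_turns_powomega_into_set_general
    (𝕄 : GBModel)
    (hctbl : AllSetsCountable 𝕄)
    (F : ClassForcing 𝕄)
    (hP : F.P = {s : ZFSet | QCond 𝕄 s})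
    (hle : ∀ s' ∈ F.P, ∀ s ∈ F.P, (F.le s' s ↔ QLe s' s)) :
    (¬ ∃ z ∈ 𝕄.M, z.toSet = PowOmega 𝕄) ∧
    ∃ τ : ZFSet, τ ∈ 𝕄.M ∧ IsName F.P τ ∧
      ∀ G : Set ZFSet, IsGeneric 𝕄 F.P F.le G →
        (nameEval G τ).toSet = PowOmega 𝕄 := by
  constructor
  · rintro ⟨z, hz, hpow⟩
    obtain ⟨f, hf, hinj⟩ := hctbl z hz
    exact powOmega_ne_toSet hz hf hinj hpow
  · refine ⟨realsName, realsName_mem_model 𝕄, hP ▸ isName_realsName 𝕄, fun G hG => ?_⟩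
    exact nameEval_realsName (hP ▸ hG.congr_le hle) (hP ▸ F.P_cls)

/-- Over a countable transitive model `M ⊨ ZF⁻` in which every set is countable
(with `𝒞` the definable classes), the finite support product `ℚ` of `ω` many copies of the
forcing with infinite partial functions `ω → 2` admits a name `τ ∈ M` with `τ^G = 𝒫(ω)^M`
for every `ℚ`-generic `G`; in particular `ℚ` turns the proper class `𝒫(ω)^M` into a set. -/
theorem product_turns_powomega_into_set
    (𝕄 : GBModel)
    (hdef : ∀ X : Set ZFSet, X ∈ 𝕄.Cls ↔ DefinableOver 𝕄.M X)
    (hctbl : AllSetsCountable 𝕄)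
    (F : ClassForcing 𝕄)
    (hP : F.P = {s : ZFSet | QCond 𝕄 s})
    (hle : ∀ s' ∈ F.P, ∀ s ∈ F.P, (F.le s' s ↔ QLe s' s)) :
    (¬ ∃ z ∈ 𝕄.M, z.toSet = PowOmega 𝕄) ∧
    ∃ τ : ZFSet, τ ∈ 𝕄.M ∧ IsName F.P τ ∧
      ∀ G : Set ZFSet, IsGeneric 𝕄 F.P F.le G →
        (nameEval G τ).toSet = PowOmega 𝕄 := by
  exact product_turns_powomega_into_set_general 𝕄 hctbl F hP hle

end CF
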